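/- Let g₅(t) = 4t − 4t³ on [0,1] and let η₀ be the unique real number with ∫₀¹ (4t−2)e^{−(4t−2)η₀} g₅(t) dt = 0. Let Γ = {(t,s,r) : 0<t<1, −1+t+s−2r>0, ((0<s<1 and s+t>1 and r>1−t) or (1<s<1+t and r>s−t)), 1−t+2s−2r>0}, Δ_A = {(t,s,r) : 0<t<1, 0<s<1, ((s<t and r>0) or (s>t and r>s−t)), ((s+t<1 and r<s) or (s+t>1 and r<1−t))}, Δ_{AA} = {(t,s,r,u) : (t,s,r) ∈ Δ_A, 1−t+2s−2r>0, 0<u<r} ∪ {(t,s,r,u) : (t,s,r) ∈ Γ, −1+t+r<u<r}, and Δ_{BB} = {(t,s,r,u) : (t,s,r) ∈ Γ, 0<u<−1+t+r}. Then 12·(∫_{Δ_{AA}} e^{−(4t−2)η₀}·2(r−u)(1−t+2s−3r−u) + ∫_{Δ_{BB}} e^{−(4t−2)η₀}·4(1−t)(1−t+s−2r)) < (1/4)·∫₀¹ e^{−(4t−2)η₀} g₅(t) dt. -/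

import Mathlib

open MeasureTheory intervalIntegral

/-- The volume function `g₅(t) = 4t − 4t³`. -/
noncomputable def gFive (t : ℝ) : ℝ := 4 * t - 4 * t ^ 3

/-- Region `Δ_A` in ℝ³, coordinates `(t, s, r)`. -/
def DeltaA : Set (ℝ × ℝ × ℝ) :=
  {p | 0 < p.1 ∧ p.1 < 1 ∧ 0 < p.2.1 ∧ p.2.1 < 1 ∧
       ((p.2.1 < p.1 ∧ p.2.2 > 0) ∨ (p.2.1 > p.1 ∧ p.2.2 > p.2.1 - p.1)) ∧
       ((p.2.1 + p.1 < 1 ∧ p.2.2 < p.2.1) ∨ (p.2.1 + p.1 > 1 ∧ p.2.2 < 1 - p.1))}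

/-- Region `Γ` in ℝ³, coordinates `(t, s, r)`. -/
def GammaR : Set (ℝ × ℝ × ℝ) :=
  {p | 0 < p.1 ∧ p.1 < 1 ∧ -1 + p.1 + p.2.1 - 2 * p.2.2 > 0 ∧
       ((0 < p.2.1 ∧ p.2.1 < 1 ∧ p.2.1 + p.1 > 1 ∧ p.2.2 > 1 - p.1) ∨
        (1 < p.2.1 ∧ p.2.1 < 1 + p.1 ∧ p.2.2 > p.2.1 - p.1)) ∧
       1 - p.1 + 2 * p.2.1 - 2 * p.2.2 > 0}

/-- Region `Δ_{AA}` in ℝ⁴, coordinates `(t, s, r, u)`. -/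
def DeltaAA : Set (ℝ × ℝ × ℝ × ℝ) :=
  {p | ((p.1, p.2.1, p.2.2.1) ∈ DeltaA ∧
          1 - p.1 + 2 * p.2.1 - 2 * p.2.2.1 > 0 ∧ 0 < p.2.2.2 ∧ p.2.2.2 < p.2.2.1) ∨
       ((p.1, p.2.1, p.2.2.1) ∈ GammaR ∧
          -1 + p.1 + p.2.2.1 < p.2.2.2 ∧ p.2.2.2 < p.2.2.1)}

/-- Region `Δ_{BB}` in ℝ⁴, coordinates `(t, s, r, u)`. -/
def DeltaBB : Set (ℝ × ℝ × ℝ × ℝ) :=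
  {p | (p.1, p.2.1, p.2.2.1) ∈ GammaR ∧ 0 < p.2.2.2 ∧ p.2.2.2 < -1 + p.1 + p.2.2.1}

/-!
Slice at height `t`. Off the null planes `s = t`, `s = 1 - t` and `s = 1`, the piecewise conditions
collapse: `Δ_A` becomes `0 < r < 1 - t`, `r < s < r + t`, and `Γ` becomes `1 - t < r < 2t - 1`,
`2r + 1 - t < s < r + t`, which is empty for `t ≤ 2/3`. With `r` as the outermost variable the slice
integrals are therefore polynomials in `t` on each side of `t = 2/3`. Twelve times their sum is
smaller than `g₅(t) / 4` for every `0 < t < 1`, so the estimate holds for any positive weight.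
-/

open Set

section Slices

variable {α β E : Type*} [MeasurableSpace α] [MeasurableSpace β]
  [NormedAddCommGroup E] [NormedSpace ℝ E]
  {μ : Measure α} {ν : Measure β}
  {S : Set (α × β)} {f : α × β → E}

lemma integral_indicator_slice (hS : MeasurableSet S) (x : α) :
    ∫ y, S.indicator f (x, y) ∂ν = ∫ y in Prod.mk x ⁻¹' S, f (x, y) ∂ν :=
  MeasureTheory.integral_indicator (f := fun y ↦ f (x, y)) (measurable_prodMk_left hS)

lemma integrable_setIntegral_slice [SFinite μ] [SFinite ν] (hS : MeasurableSet S)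
    (hf : IntegrableOn f S (μ.prod ν)) :
    Integrable (fun x ↦ ∫ y in Prod.mk x ⁻¹' S, f (x, y) ∂ν) μ := by
  simpa only [integral_indicator_slice hS] using (hf.integrable_indicator hS).integral_prod_left

lemma setIntegral_prod_eq_integral_slice [SFinite μ] [SFinite ν] (hS : MeasurableSet S)
    (hf : IntegrableOn f S (μ.prod ν)) :
    ∫ p in S, f p ∂μ.prod ν = ∫ x, ∫ y in Prod.mk x ⁻¹' S, f (x, y) ∂ν ∂μ := by
  simpa only [integral_indicator_slice hS, MeasureTheory.integral_indicator hS]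
    using integral_prod _ (hf.integrable_indicator hS)

end Slices

section Weight

variable {β : Type*} [TopologicalSpace β] [T2Space β] [SecondCountableTopology β]
  [MeasureSpace β] [BorelSpace β] [SFinite (volume : Measure β)]
  [IsFiniteMeasureOnCompacts (volume : Measure β)]
  {a b : ℝ} {K : Set β} {S : Set (ℝ × β)} {w : ℝ → ℝ} {f : ℝ × β → ℝ}

lemma integrableOn_fst_mul (hab : a ≤ b) (hK : IsCompact K) (hSK : S ⊆ Icc a b ×ˢ K)
    (hw : IntervalIntegrable w volume a b) (hf : Continuous f) :
    IntegrableOn (fun p ↦ w p.1 * f p) S := by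
  have : IsFiniteMeasure (volume.restrict K) := isFiniteMeasure_restrict.2 hK.measure_lt_top.ne
  have hw_fst : IntegrableOn (fun p : ℝ × β ↦ w p.1) (Icc a b ×ˢ K) := by
    rw [IntegrableOn, Measure.volume_eq_prod, ← Measure.prod_restrict]
    exact ((intervalIntegrable_iff_integrableOn_Icc_of_le hab).1 hw).comp_fst _
  exact (hw_fst.mul_continuousOn hf.continuousOn (isCompact_Icc.prod hK)).mono_set hSK

lemma intervalIntegrable_mul_setIntegral_slice (hab : a ≤ b) (hS : MeasurableSet S)
    (hK : IsCompact K) (hSK : S ⊆ Icc a b ×ˢ K) (hw : IntervalIntegrable w volume a b)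
    (hf : Continuous f) :
    IntervalIntegrable (fun t ↦ w t * ∫ q in Prod.mk t ⁻¹' S, f (t, q)) volume a b := by
  simpa only [MeasureTheory.integral_const_mul] using
    (integrable_setIntegral_slice hS (integrableOn_fst_mul hab hK hSK hw hf)).intervalIntegrable

lemma setIntegral_fst_mul_eq_integral_slice (hab : a ≤ b) (hS : MeasurableSet S)
    (hK : IsCompact K) (hSK : S ⊆ Icc a b ×ˢ K) (hw : IntervalIntegrable w volume a b)
    (hf : Continuous f) :
    ∫ p in S, w p.1 * f p = ∫ t in a..b, w t * ∫ q in Prod.mk t ⁻¹' S, f (t, q) := by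
  have slice_eq_zero (t : ℝ) (ht : t ∉ Icc a b) : w t * ∫ q in Prod.mk t ⁻¹' S, f (t, q) = 0 := by
    have : Prod.mk t ⁻¹' S = ∅ := eq_empty_of_forall_notMem fun q hq ↦ ht (hSK hq).1
    simp [this]
  rw [integral_of_le hab, ← integral_Icc_eq_integral_Ioc,
    setIntegral_eq_integral_of_forall_compl_eq_zero slice_eq_zero, Measure.volume_eq_prod,
    setIntegral_prod_eq_integral_slice hS (integrableOn_fst_mul hab hK hSK hw hf)]
  simp only [MeasureTheory.integral_const_mul]

end Weight

lemma setIntegral_Ioo_eq_of_eqOn_cubic {a b : ℝ} (hab : a ≤ b) {f : ℝ → ℝ} (c₀ c₁ c₂ c₃ : ℝ)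
    (hf : EqOn f (fun x ↦ c₀ + c₁ * x + c₂ * x ^ 2 + c₃ * x ^ 3) (Ioo a b)) :
    ∫ x in Ioo a b, f x = c₀ * (b - a) + c₁ * ((b ^ 2 - a ^ 2) / 2) + c₂ * ((b ^ 3 - a ^ 3) / 3)
      + c₃ * ((b ^ 4 - a ^ 4) / 4) := by
  rw [setIntegral_congr_fun measurableSet_Ioo hf, ← integral_Ioc_eq_integral_Ioo,
    ← integral_of_le hab, intervalIntegral.integral_add, intervalIntegral.integral_add,
    intervalIntegral.integral_add]
  · norm_num [intervalIntegral.integral_const_mul, intervalIntegral.integral_const_mul c₁ fun x ↦ x,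
      mul_comm c₀]
  all_goals exact Continuous.intervalIntegrable (by fun_prop) a b

lemma setIntegral_Ioo_sub_mul_sub {a b : ℝ} (hab : a ≤ b) (k c : ℝ) :
    ∫ u in Ioo a b, k * (b - u) * (c - u) =
      k * ((b - a) ^ 2 * (c - b) / 2 + (b - a) ^ 3 / 3) := by
  rw [setIntegral_Ioo_eq_of_eqOn_cubic hab (k * b * c) (-k * (b + c)) k 0 fun u _ ↦ by ring]
  ring

/-- The open region of points `(s, r, u)` with `r ∈ (a, b)`, `s ∈ (s₁ r, s₂ r)` and
`u ∈ (u₁ r, u₂ r)`. Up to null sets the slices `t = const` of `DeltaAA` and `DeltaBB` are unions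
of such regions, which is why the middle coordinate is the one fibred over. -/
def fiberedBox (a b : ℝ) (s₁ s₂ u₁ u₂ : ℝ → ℝ) : Set (ℝ × ℝ × ℝ) :=
  {q | q.2.1 ∈ Ioo a b ∧ q.1 ∈ Ioo (s₁ q.2.1) (s₂ q.2.1) ∧ q.2.2 ∈ Ioo (u₁ q.2.1) (u₂ q.2.1)}

section FiberedBox

variable {a b : ℝ} {s₁ s₂ u₁ u₂ : ℝ → ℝ}

lemma fiberedBox_eq_empty (hba : b ≤ a) : fiberedBox a b s₁ s₂ u₁ u₂ = ∅ :=
  eq_empty_of_forall_notMem fun _ hq ↦ (hq.1.1.trans hq.1.2).not_ge hba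

lemma measurableSet_fiberedBox (hs₁ : Measurable s₁) (hs₂ : Measurable s₂) (hu₁ : Measurable u₁)
    (hu₂ : Measurable u₂) : MeasurableSet (fiberedBox a b s₁ s₂ u₁ u₂) := by
  simp only [fiberedBox, mem_Ioo]
  measurability

lemma isBounded_fiberedBox (hs₁ : Continuous s₁) (hs₂ : Continuous s₂) (hu₁ : Continuous u₁)
    (hu₂ : Continuous u₂) : Bornology.IsBounded (fiberedBox a b s₁ s₂ u₁ u₂) := by
  have bounded_on {g : ℝ → ℝ} (hg : Continuous g) : ∃ m M, ∀ r ∈ Icc a b, m ≤ g r ∧ g r ≤ M := by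
    have hg_image := isCompact_Icc.image (s := Icc a b) hg
    obtain ⟨m, hm⟩ := hg_image.bddBelow
    obtain ⟨M, hM⟩ := hg_image.bddAbove
    exact ⟨m, M, fun r hr ↦ ⟨hm (mem_image_of_mem g hr), hM (mem_image_of_mem g hr)⟩⟩
  obtain ⟨ms, _, hms⟩ := bounded_on hs₁
  obtain ⟨_, Ms, hMs⟩ := bounded_on hs₂
  obtain ⟨mu, _, hmu⟩ := bounded_on hu₁
  obtain ⟨_, Mu, hMu⟩ := bounded_on hu₂
  refine (Metric.isBounded_Icc (ms, a, mu) (Ms, b, Mu)).subset ?_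
  rintro ⟨s, r, u⟩ ⟨hr, hs, hu⟩
  have hr := Ioo_subset_Icc_self hr
  exact ⟨⟨(hms r hr).1.trans hs.1.le, hr.1, (hmu r hr).1.trans hu.1.le⟩,
    hs.2.le.trans (hMs r hr).2, hr.2, hu.2.le.trans (hMu r hr).2⟩

variable {f : ℝ × ℝ × ℝ → ℝ}

lemma integrableOn_fiberedBox (hf : Continuous f) (hs₁ : Continuous s₁) (hs₂ : Continuous s₂)
    (hu₁ : Continuous u₁) (hu₂ : Continuous u₂) :
    IntegrableOn f (fiberedBox a b s₁ s₂ u₁ u₂) :=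
  (hf.continuousOn.integrableOn_compact
    (isBounded_fiberedBox hs₁ hs₂ hu₁ hu₂).isCompact_closure).mono_set subset_closure

lemma setIntegral_fiberedBox (hf : Continuous f) (hs₁ : Continuous s₁) (hs₂ : Continuous s₂)
    (hu₁ : Continuous u₁) (hu₂ : Continuous u₂) :
    ∫ q in fiberedBox a b s₁ s₂ u₁ u₂, f q =
      ∫ r in Ioo a b, ∫ u in Ioo (u₁ r) (u₂ r), ∫ s in Ioo (s₁ r) (s₂ r), f (s, r, u) := by
  have hB : MeasurableSet (fiberedBox a b s₁ s₂ u₁ u₂) :=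
    measurableSet_fiberedBox hs₁.measurable hs₂.measurable hu₁.measurable hu₂.measurable
  have hint := (integrableOn_fiberedBox hf hs₁ hs₂ hu₁ hu₂).integrable_indicator hB
  have indicator_eq (s r u : ℝ) : (fiberedBox a b s₁ s₂ u₁ u₂).indicator f (s, r, u) =
      (Ioo a b).indicator (fun r ↦ (Ioo (u₁ r) (u₂ r)).indicator (fun u ↦
        (Ioo (s₁ r) (s₂ r)).indicator (fun s ↦ f (s, r, u)) s) u) r := by
    simp only [indicator, fiberedBox, mem_ofPred_eq]
    grind
  rw [← MeasureTheory.integral_indicator hB, Measure.volume_eq_prod, integral_prod_symm _ hint,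
    Measure.volume_eq_prod, integral_prod _ hint.integral_prod_right]
  simp only [indicator_eq, ← MeasureTheory.integral_indicator measurableSet_Ioo]
  congr! with r
  by_cases hr : r ∈ Ioo a b
  · simp only [indicator_of_mem hr]
    congr! with u
    by_cases hu : u ∈ Ioo (u₁ r) (u₂ r) <;> simp [hu]
  · simp [hr]

end FiberedBox

/-- The volume of `W^{E_C}_{(1,t,s,r)} − u C̃` on `DeltaAA`, in coordinates `(t, s, r, u)`. -/
def volAA (p : ℝ × ℝ × ℝ × ℝ) : ℝ :=
  2 * (p.2.2.1 - p.2.2.2) * (1 - p.1 + 2 * p.2.1 - 3 * p.2.2.1 - p.2.2.2)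

/-- The volume of `W^{E_C}_{(1,t,s,r)} − u C̃` on `DeltaBB`, in coordinates `(t, s, r, u)`. -/
def volBB (p : ℝ × ℝ × ℝ × ℝ) : ℝ :=
  4 * (1 - p.1) * (1 - p.1 + p.2.1 - 2 * p.2.2.1)

lemma continuous_volAA : Continuous volAA := by
  unfold volAA
  fun_prop

lemma continuous_volBB : Continuous volBB := by
  unfold volBB
  fun_prop

lemma isOpen_deltaAA : IsOpen DeltaAA := by
  simp only [DeltaAA, DeltaA, GammaR, ofPred_and, ofPred_or, gt_iff_lt]
  repeat' first
    | apply IsOpen.inter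
    | apply IsOpen.union
    | exact isOpen_lt (by fun_prop) (by fun_prop)

lemma isOpen_deltaBB : IsOpen DeltaBB := by
  simp only [DeltaBB, GammaR, ofPred_and, ofPred_or, gt_iff_lt]
  repeat' first
    | apply IsOpen.inter
    | apply IsOpen.union
    | exact isOpen_lt (by fun_prop) (by fun_prop)

lemma deltaAA_subset_Icc_prod : DeltaAA ⊆ Icc 0 1 ×ˢ Icc (0, 0, 0) (2, 1, 1) := by
  rintro ⟨t, s, r, u⟩ h
  simp only [DeltaAA, DeltaA, GammaR, mem_ofPred_eq] at h
  simp only [mem_prod, mem_Icc, Prod.mk_le_mk]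
  grind

lemma deltaBB_subset_Icc_prod : DeltaBB ⊆ Icc 0 1 ×ˢ Icc (0, 0, 0) (2, 1, 1) := by
  rintro ⟨t, s, r, u⟩ h
  simp only [DeltaBB, GammaR, mem_ofPred_eq] at h
  simp only [mem_prod, mem_Icc, Prod.mk_le_mk]
  grind

lemma ae_fst_ne {β : Type*} [MeasureSpace β] [SFinite (volume : Measure β)] (c : ℝ) :
    ∀ᵐ q : ℝ × β, q.1 ≠ c :=
  Measure.quasiMeasurePreserving_fst.ae (volume.ae_ne c)

section Regions

variable {t : ℝ}

lemma mem_deltaA_iff {s r : ℝ} (hst : s ≠ t) (hst' : s ≠ 1 - t) :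
    (t, s, r) ∈ DeltaA ↔ r ∈ Ioo 0 (1 - t) ∧ s ∈ Ioo r (r + t) := by
  simp only [DeltaA, mem_ofPred_eq, mem_Ioo]
  grind

lemma mem_gammaR_iff {s r : ℝ} (ht : t ∈ Ioo 0 1) (hs : s ≠ 1) :
    (t, s, r) ∈ GammaR ↔
      r ∈ Ioo (1 - t) (2 * t - 1) ∧ s ∈ Ioo (2 * r + 1 - t) (r + t) := by
  simp only [GammaR, mem_ofPred_eq, mem_Ioo] at ht ⊢
  grind

/-- The part of the slice of `DeltaAA` that lies over `DeltaA`, up to a null set. -/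
def lowerAA (t : ℝ) : Set (ℝ × ℝ × ℝ) :=
  fiberedBox 0 (1 - t) (fun r ↦ r) (fun r ↦ r + t) (fun _ ↦ 0) (fun r ↦ r)

/-- The part of the slice of `DeltaAA` that lies over `GammaR`, up to a null set. -/
def upperAA (t : ℝ) : Set (ℝ × ℝ × ℝ) :=
  fiberedBox (1 - t) (2 * t - 1) (fun r ↦ 2 * r + 1 - t) (fun r ↦ r + t)
    (fun r ↦ -1 + t + r) (fun r ↦ r)

/-- The slice of `DeltaBB`, up to a null set. -/
def boxBB (t : ℝ) : Set (ℝ × ℝ × ℝ) :=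
  fiberedBox (1 - t) (2 * t - 1) (fun r ↦ 2 * r + 1 - t) (fun r ↦ r + t)
    (fun _ ↦ 0) (fun r ↦ -1 + t + r)

lemma slice_deltaAA_ae_eq (ht : t ∈ Ioo 0 1) :
    Prod.mk t ⁻¹' DeltaAA =ᵐ[volume] (lowerAA t ∪ upperAA t : Set _) := by
  rw [Filter.eventuallyEq_set]
  filter_upwards [ae_fst_ne t, ae_fst_ne (1 - t), ae_fst_ne 1] with ⟨s, r, u⟩ hst hst' hs
  simp only [DeltaAA, mem_preimage, mem_ofPred_eq, mem_deltaA_iff hst hst', mem_gammaR_iff ht hs,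
    lowerAA, upperAA, fiberedBox, mem_union, mem_Ioo] at ht ⊢
  grind

lemma slice_deltaBB_ae_eq (ht : t ∈ Ioo 0 1) : Prod.mk t ⁻¹' DeltaBB =ᵐ[volume] boxBB t := by
  rw [Filter.eventuallyEq_set]
  filter_upwards [ae_fst_ne 1] with ⟨s, r, u⟩ hs
  simp only [DeltaBB, mem_preimage, mem_ofPred_eq, mem_gammaR_iff ht hs, boxBB, fiberedBox,
    and_assoc, mem_Ioo]

lemma setIntegral_Ioo_volAA {a b : ℝ} (hab : a ≤ b) (r u : ℝ) :
    ∫ s in Ioo a b, volAA (t, s, r, u) =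
      2 * (b - a) * (r - u) * (1 - t + a + b - 3 * r - u) := by
  rw [setIntegral_Ioo_eq_of_eqOn_cubic hab (2 * (r - u) * (1 - t - 3 * r - u)) (4 * (r - u)) 0 0
    fun s _ ↦ by simp only [volAA]; ring]
  ring

lemma setIntegral_Ioo_volBB {a b : ℝ} (hab : a ≤ b) (r u : ℝ) :
    ∫ s in Ioo a b, volBB (t, s, r, u) =
      2 * (1 - t) * (b - a) * (2 * (1 - t) + a + b - 4 * r) := by
  rw [setIntegral_Ioo_eq_of_eqOn_cubic hab (4 * (1 - t) * (1 - t - 2 * r)) (4 * (1 - t)) 0 0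
    fun s _ ↦ by simp only [volBB]; ring]
  ring

lemma setIntegral_lowerAA (ht : t ∈ Ioo 0 1) :
    ∫ q in lowerAA t, volAA (t, q) = t ^ 2 * (1 - t) ^ 3 / 3 := by
  calc ∫ q in lowerAA t, volAA (t, q)
    _ = ∫ r in Ioo 0 (1 - t), ∫ u in Ioo 0 r, ∫ s in Ioo r (r + t), volAA (t, s, r, u) :=
      setIntegral_fiberedBox (continuous_volAA.comp (by fun_prop)) (by fun_prop) (by fun_prop)
        (by fun_prop) (by fun_prop)
    _ = ∫ r in Ioo 0 (1 - t), ∫ u in Ioo 0 r, 2 * t * (r - u) * (1 - r - u) := by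
      congr! 4 with r u
      rw [setIntegral_Ioo_volAA (by linarith [ht.1])]
      ring
    _ = ∫ r in Ioo 0 (1 - t), t * r ^ 2 * (1 - 4 / 3 * r) := by
      refine setIntegral_congr_fun measurableSet_Ioo fun r hr ↦ ?_
      rw [setIntegral_Ioo_sub_mul_sub hr.1.le]
      ring
    _ = t ^ 2 * (1 - t) ^ 3 / 3 := by
      rw [setIntegral_Ioo_eq_of_eqOn_cubic (by linarith [ht.2]) 0 0 t (-4 / 3 * t)
        fun r _ ↦ by ring]
      ring

lemma setIntegral_upperAA (ht : t ∈ Icc (2 / 3) 1) :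
    ∫ q in upperAA t, volAA (t, q) =
      11 / 6 * (1 - t) ^ 3 * (3 * t - 2) ^ 2 + 1 / 3 * (1 - t) ^ 2 * (3 * t - 2) ^ 3 := by
  obtain ⟨ht₁, ht₂⟩ := ht
  calc ∫ q in upperAA t, volAA (t, q)
    _ = ∫ r in Ioo (1 - t) (2 * t - 1), ∫ u in Ioo (-1 + t + r) r,
          ∫ s in Ioo (2 * r + 1 - t) (r + t), volAA (t, s, r, u) :=
      setIntegral_fiberedBox (continuous_volAA.comp (by fun_prop)) (by fun_prop) (by fun_prop)
        (by fun_prop) (by fun_prop)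
    _ = ∫ r in Ioo (1 - t) (2 * t - 1), ∫ u in Ioo (-1 + t + r) r,
          2 * (2 * t - 1 - r) * (r - u) * (2 - t - u) := by
      refine setIntegral_congr_fun measurableSet_Ioo fun r hr ↦ ?_
      congr! 2 with u
      rw [setIntegral_Ioo_volAA (by linarith [hr.2])]
      ring
    _ = ∫ r in Ioo (1 - t) (2 * t - 1),
          (1 - t) ^ 2 * (2 * t - 1 - r) * ((8 - 5 * t) / 3 - r) := by
      congr! 2 with r
      rw [setIntegral_Ioo_sub_mul_sub (by linarith)]
      ring
    _ = 11 / 6 * (1 - t) ^ 3 * (3 * t - 2) ^ 2 + 1 / 3 * (1 - t) ^ 2 * (3 * t - 2) ^ 3 := by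
      rw [setIntegral_Ioo_sub_mul_sub (by linarith)]
      ring

lemma setIntegral_boxBB (ht : 2 / 3 ≤ t) :
    ∫ q in boxBB t, volBB (t, q) =
      4 / 3 * (1 - t) ^ 2 * (3 * t - 2) ^ 3 + 1 / 6 * (1 - t) * (3 * t - 2) ^ 4 := by
  calc ∫ q in boxBB t, volBB (t, q)
    _ = ∫ r in Ioo (1 - t) (2 * t - 1), ∫ u in Ioo 0 (-1 + t + r),
          ∫ s in Ioo (2 * r + 1 - t) (r + t), volBB (t, s, r, u) :=
      setIntegral_fiberedBox (continuous_volBB.comp (by fun_prop)) (by fun_prop) (by fun_prop)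
        (by fun_prop) (by fun_prop)
    _ = ∫ r in Ioo (1 - t) (2 * t - 1),
          2 * (1 - t) * (2 * t - 1 - r) * (3 - 2 * t - r) * (-1 + t + r) := by
      refine setIntegral_congr_fun measurableSet_Ioo fun r hr ↦ ?_
      simp only [setIntegral_Ioo_volBB (by linarith [hr.2] : 2 * r + 1 - t ≤ r + t),
        setIntegral_const, Real.volume_real_Ioo_of_le (by linarith [hr.1] : 0 ≤ -1 + t + r),
        smul_eq_mul]
      ring
    _ = 4 / 3 * (1 - t) ^ 2 * (3 * t - 2) ^ 3 + 1 / 6 * (1 - t) * (3 * t - 2) ^ 4 := by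
      rw [setIntegral_Ioo_eq_of_eqOn_cubic (by linarith)
        (-2 * (1 - t) ^ 2 * (2 * t - 1) * (3 - 2 * t))
        (2 * (1 - t) * ((2 * t - 1) * (3 - 2 * t) + 2 * (1 - t)))
        (-2 * (1 - t) * (3 - t)) (2 * (1 - t)) fun r _ ↦ by ring]
      ring

/-- The unweighted mass of the slice at height `t`, which is the density in `t` of the two
integrals on the left-hand side of the estimate. -/
noncomputable def sliceVolume (t : ℝ) : ℝ :=
  (∫ q in Prod.mk t ⁻¹' DeltaAA, volAA (t, q)) + ∫ q in Prod.mk t ⁻¹' DeltaBB, volBB (t, q)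

lemma sliceVolume_eq (ht : t ∈ Ioo 0 1) :
    sliceVolume t = (∫ q in lowerAA t, volAA (t, q)) + (∫ q in upperAA t, volAA (t, q)) +
      ∫ q in boxBB t, volBB (t, q) := by
  have disjoint_lowerAA_upperAA : Disjoint (lowerAA t) (upperAA t) :=
    disjoint_left.2 fun q hlower hupper ↦ (hlower.1.2.trans hupper.1.1).false
  have measurableSet_upperAA : MeasurableSet (upperAA t) :=
    measurableSet_fiberedBox (by fun_prop) (by fun_prop) (by fun_prop) (by fun_prop)
  have continuous_slice : Continuous fun q ↦ volAA (t, q) := continuous_volAA.comp (by fun_prop)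
  rw [sliceVolume, setIntegral_congr_set (slice_deltaAA_ae_eq ht),
    setIntegral_congr_set (slice_deltaBB_ae_eq ht),
    setIntegral_union disjoint_lowerAA_upperAA measurableSet_upperAA]
  all_goals
    exact integrableOn_fiberedBox continuous_slice (by fun_prop) (by fun_prop) (by fun_prop)
      (by fun_prop)

lemma sliceVolume_of_le (ht₀ : 0 < t) (ht : t ≤ 2 / 3) :
    sliceVolume t = t ^ 2 * (1 - t) ^ 3 / 3 := by
  have ht₁ : t ∈ Ioo 0 1 := ⟨ht₀, by linarith⟩
  have hupper : upperAA t = ∅ := fiberedBox_eq_empty (by linarith)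
  have hBB : boxBB t = ∅ := fiberedBox_eq_empty (by linarith)
  simp [sliceVolume_eq ht₁, setIntegral_lowerAA ht₁, hupper, hBB]

lemma sliceVolume_of_ge (ht : 2 / 3 ≤ t) (ht₁ : t < 1) :
    sliceVolume t = t ^ 2 * (1 - t) ^ 3 / 3 + 11 / 6 * (1 - t) ^ 3 * (3 * t - 2) ^ 2 +
      5 / 3 * (1 - t) ^ 2 * (3 * t - 2) ^ 3 + 1 / 6 * (1 - t) * (3 * t - 2) ^ 4 := by
  have ht₀ : t ∈ Ioo 0 1 := ⟨by linarith, ht₁⟩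
  rw [sliceVolume_eq ht₀, setIntegral_lowerAA ht₀, setIntegral_upperAA ⟨ht, ht₁.le⟩,
    setIntegral_boxBB ht]
  ring

lemma sliceVolume_lt (ht : t ∈ Ioo 0 1) : 12 * sliceVolume t < 1 / 4 * gFive t := by
  obtain ⟨ht₀, ht₁⟩ := ht
  have : 0 < 1 - t := sub_pos.2 ht₁
  rw [← sub_pos]
  rcases le_total t (2 / 3) with ht | ht
  · have gap_eq : 1 / 4 * gFive t - 12 * sliceVolume t =
        t * (1 - t) * (2 * t + (1 - t) * (1 - 2 * t) ^ 2) := by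
      rw [sliceVolume_of_le ht₀ ht, gFive]
      ring
    rw [gap_eq]
    positivity
  · have gap_eq : 1 / 4 * gFive t - 12 * sliceVolume t =
        (1 - t) ^ 2 * (1 + (1 - t) * (47 - 184 * (1 - t) + 176 * (1 - t) ^ 2)) := by
      rw [sliceVolume_of_ge ht ht₁, gFive]
      ring
    rw [gap_eq]
    have : 0 < 47 - 184 * (1 - t) + 176 * (1 - t) ^ 2 := by
      nlinarith
    positivity

end Regions

section Estimate

variable {w : ℝ → ℝ}

lemma intervalIntegrable_mul_sliceVolume (hw : IntervalIntegrable w volume 0 1) :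
    IntervalIntegrable (fun t ↦ w t * sliceVolume t) volume 0 1 := by
  simp only [sliceVolume, mul_add]
  exact (intervalIntegrable_mul_setIntegral_slice zero_le_one isOpen_deltaAA.measurableSet
      isCompact_Icc deltaAA_subset_Icc_prod hw continuous_volAA).add
    (intervalIntegrable_mul_setIntegral_slice zero_le_one isOpen_deltaBB.measurableSet
      isCompact_Icc deltaBB_subset_Icc_prod hw continuous_volBB)

lemma setIntegral_deltaAA_add_setIntegral_deltaBB (hw : IntervalIntegrable w volume 0 1) :
    (∫ p in DeltaAA, w p.1 * volAA p) + (∫ p in DeltaBB, w p.1 * volBB p) =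
      ∫ t in 0..1, w t * sliceVolume t := by
  have hAA := isOpen_deltaAA.measurableSet
  have hBB := isOpen_deltaBB.measurableSet
  rw [setIntegral_fst_mul_eq_integral_slice zero_le_one hAA isCompact_Icc deltaAA_subset_Icc_prod
      hw continuous_volAA,
    setIntegral_fst_mul_eq_integral_slice zero_le_one hBB isCompact_Icc deltaBB_subset_Icc_prod
      hw continuous_volBB,
    ← intervalIntegral.integral_add
      (intervalIntegrable_mul_setIntegral_slice zero_le_one hAA isCompact_Icc
        deltaAA_subset_Icc_prod hw continuous_volAA)
      (intervalIntegrable_mul_setIntegral_slice zero_le_one hBB isCompact_Icc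
        deltaBB_subset_Icc_prod hw continuous_volBB)]
  simp only [sliceVolume, mul_add]

theorem Sg_WEC_Ctilde_lt_general (hw : IntervalIntegrable w volume 0 1)
    (hw_pos : ∀ t ∈ Ioo 0 1, 0 < w t) :
    12 * ((∫ p in DeltaAA, w p.1 * volAA p) + ∫ p in DeltaBB, w p.1 * volBB p) <
      1 / 4 * ∫ t in 0..1, w t * gFive t := by
  have hslice := (intervalIntegrable_mul_sliceVolume hw).const_mul 12
  have hgFive : IntervalIntegrable (fun t ↦ 1 / 4 * (w t * gFive t)) volume 0 1 := by
    have : Continuous gFive := by unfold gFive; fun_prop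
    exact (hw.mul_continuousOn this.continuousOn).const_mul _
  rw [setIntegral_deltaAA_add_setIntegral_deltaBB hw, ← intervalIntegral.integral_const_mul,
    ← intervalIntegral.integral_const_mul, ← sub_pos, ← intervalIntegral.integral_sub hgFive hslice]
  refine intervalIntegral_pos_of_pos_on (hgFive.sub hslice) (fun t ht ↦ ?_) zero_lt_one
  have := mul_pos (hw_pos t ht) (sub_pos.2 (sliceVolume_lt ht))
  linarith

end Estimate

/-- The weighted estimate `S^g(W^{E_C}_{••••}; C̃) < 1/4` for the soliton candidate `η₀`
of `M₅` (the root of the displayed constraint). -/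
theorem Sg_WEC_Ctilde_lt (η₀ : ℝ)
    (hη : (∫ t in (0:ℝ)..1, (4 * t - 2) * Real.exp (-(4 * t - 2) * η₀) * gFive t) = 0) :
    12 * ((∫ p in DeltaAA,
             Real.exp (-(4 * p.1 - 2) * η₀) *
               (2 * (p.2.2.1 - p.2.2.2) *
                 (1 - p.1 + 2 * p.2.1 - 3 * p.2.2.1 - p.2.2.2))) +
          (∫ p in DeltaBB,
             Real.exp (-(4 * p.1 - 2) * η₀) *
               (4 * (1 - p.1) * (1 - p.1 + p.2.1 - 2 * p.2.2.1))))
      < 1 / 4 * ∫ t in (0:ℝ)..1, Real.exp (-(4 * t - 2) * η₀) * gFive t :=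
  Sg_WEC_Ctilde_lt_general (w := fun t ↦ Real.exp (-(4 * t - 2) * η₀))
    (Continuous.intervalIntegrable (by fun_prop) 0 1) fun _ _ ↦ Real.exp_pos _
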